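/- arXiv:1305.5568 — 5 statements merged into one kernel-verified Lean document; each statement's English description precedes it below -/
import Mathlib

section
/- The expectation of the position satisfies lim_{n→∞} E(S_n)/n^{1/2} = √(2/π). -/
open Filter

/-!
The walk is a martingale away from the origin and is pushed up by one on each visit there, so
`E(S_n)` is the expected number of visits to `0` before time `n`, namely `∑ k < n, P{S_k = 0}`.
Since the reflected walk is the absolute value of the simple walk on `ℤ`, `P{S_{2k} = 0}` is
`centralBinom k / 4 ^ k`, and the sum collapses to `n * centralBinom ⌊n/2⌋ / 4 ^ ⌊n/2⌋`. Wallis'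
product gives `centralBinom k / 4 ^ k ∼ 1 / √(π k)`, whence the limit `√2 / √π`.
-/

open Topology

/-- One step of the walk on `ℕ` reflected at the origin, acting on mass functions. Mass
functions are arbitrary `f : ℕ → ℝ`, not assumed nonnegative or normalised. -/
noncomputable def reflectedStep (f : ℕ → ℝ) : ℕ → ℝ
  | 0 => f 1 / 2
  | 1 => f 0 + f 2 / 2
  | x + 2 => (f (x + 1) + f (x + 3)) / 2

/-- The law at time `n` of the reflected walk: `reflectedWalkLaw n x` is `P{S_n = x}`. It starts at
time `0` from the unit mass at the origin. -/
noncomputable def reflectedWalkLaw : ℕ → ℕ → ℝ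
  | 0 => Pi.single 0 1
  | n + 1 => reflectedStep (reflectedWalkLaw n)

theorem reflectedWalkLaw_one : reflectedWalkLaw 1 = Pi.single 1 1 := by
  funext x
  match x with
  | 0 | 1 | x + 2 => simp [reflectedWalkLaw, reflectedStep]

theorem eq_reflectedWalkLaw_of_step {P : ℕ → ℕ → ℝ} (h_one : P 1 = Pi.single 1 1)
    (h_step : ∀ n, 1 ≤ n → P (n + 1) = reflectedStep (P n)) {n : ℕ} (hn : 1 ≤ n) :
    P n = reflectedWalkLaw n := by
  induction n, hn using Nat.le_induction with
  | base => rw [h_one, reflectedWalkLaw_one]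
  | succ n hn ih => rw [h_step n hn, ih, reflectedWalkLaw]

theorem reflectedWalkLaw_eq_zero_of_odd {n x : ℕ} (h : Odd (n + x)) :
    reflectedWalkLaw n x = 0 := by
  induction n generalizing x with
  | zero => exact Pi.single_eq_of_ne (by rintro rfl; simp at h) _
  | succ n ih =>
    match x with
    | 0 => simp [reflectedWalkLaw, reflectedStep, ih (x := 1) h]
    | 1 => simp [reflectedWalkLaw, reflectedStep, ih (x := 0) (by grind), ih (x := 2) (by grind)]
    | x + 2 =>
      simp [reflectedWalkLaw, reflectedStep, ih (x := x + 1) (by grind),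
        ih (x := x + 3) (by grind)]

-- The factor `2` counts the two sites `x` and `-x` of the simple walk on `ℤ`.
theorem reflectedWalkLaw_eq_choose {n x m : ℕ} (h : n + x = 2 * m) :
    reflectedWalkLaw n x = (if x = 0 then 1 else 2) * n.choose m / 2 ^ n := by
  induction n generalizing x m with
  | zero =>
    obtain rfl : x = 2 * m := by lia
    cases m <;> simp [reflectedWalkLaw]
  | succ n ih =>
    obtain ⟨m, rfl⟩ : ∃ k, m = k + 1 := ⟨m - 1, by lia⟩
    have pascal : ((n + 1).choose (m + 1) : ℝ) = n.choose m + n.choose (m + 1) := by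
      exact_mod_cast Nat.choose_succ_succ n m
    match x with
    | 0 =>
      have middle : n.choose m = n.choose (m + 1) := Nat.choose_symm_of_eq_add (by lia)
      rw [reflectedWalkLaw, reflectedStep, ih (x := 1) (m := m + 1) (by lia), pascal, middle,
        if_neg one_ne_zero, if_pos rfl]
      ring
    | 1 =>
      rw [reflectedWalkLaw, reflectedStep, ih (x := 0) (m := m) (by lia),
        ih (x := 2) (m := m + 1) (by lia), pascal, if_pos rfl, if_neg two_ne_zero,
        if_neg one_ne_zero]
      ring
    | x + 2 =>
      rw [reflectedWalkLaw, reflectedStep, ih (x := x + 1) (m := m) (by lia),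
        ih (x := x + 3) (m := m + 1) (by lia), pascal]
      simp only [Nat.add_eq_zero_iff, OfNat.ofNat_ne_zero, one_ne_zero, and_false, if_false]
      ring

theorem reflectedWalkLaw_two_mul_zero (k : ℕ) :
    reflectedWalkLaw (2 * k) 0 = k.centralBinom / 4 ^ k := by
  rw [reflectedWalkLaw_eq_choose (m := k) rfl, if_pos rfl, one_mul,
    Nat.centralBinom_eq_two_mul_choose, pow_mul]
  norm_num

theorem summable_of_summable_natCast_mul {f : ℕ → ℝ} (hf : Summable fun x : ℕ => x * f x) :
    Summable f := by
  rw [← summable_nat_add_iff 1] at hf ⊢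
  refine .of_norm_bounded hf.norm fun x => ?_
  rw [norm_mul, Real.norm_natCast]
  exact le_mul_of_one_le_left (norm_nonneg _) (by simp)

-- The transition operator of the walk maps `x ↦ x` to `x ↦ x + 𝟙_{x = 0}`; this is the dual
-- statement for mass functions, obtained by shifting the two halves of the step.
theorem hasSum_natCast_mul_reflectedStep {f : ℕ → ℝ} {m : ℝ}
    (hf : HasSum (fun x : ℕ => x * f x) m) :
    HasSum (fun x : ℕ => x * reflectedStep f x) (m + f 0) := by
  obtain ⟨s, hs⟩ := summable_of_summable_natCast_mul hf.summable
  have from_left : HasSum (fun x : ℕ => (x + 1 : ℝ) * f x) (m + s) := by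
    simpa only [add_mul, one_mul] using hf.add hs
  have from_right : HasSum (fun x : ℕ => (x + 1 : ℝ) * f (x + 2)) (m - s + f 0) := by
    convert! (hasSum_nat_add_iff' 2).mpr (hf.sub hs) using 1
    · funext x
      push_cast
      ring
    · simp [Finset.sum_range_succ]
  have reflected : HasSum (fun x : ℕ => if x = 0 then f 0 / 2 else 0) (f 0 / 2) :=
    hasSum_ite_eq 0 _
  rw [← hasSum_nat_add_iff' 1]
  convert! ((from_left.add from_right).div_const 2).add reflected using 1
  · funext x
    cases x <;> simp only [reflectedStep, Nat.cast_add, Nat.cast_zero, Nat.cast_one, zero_add,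
      add_eq_zero, one_ne_zero, and_false, if_true, if_false] <;> ring
  · rw [Finset.sum_range_one, Nat.cast_zero]
    ring

theorem hasSum_natCast_mul_reflectedWalkLaw (n : ℕ) :
    HasSum (fun x : ℕ => x * reflectedWalkLaw n x)
      (∑ k ∈ Finset.range n, reflectedWalkLaw k 0) := by
  induction n with
  | zero =>
    convert! (hasSum_zero : HasSum (fun _ : ℕ => (0 : ℝ)) 0) using 2 with x
    cases x <;> simp [reflectedWalkLaw]
  | succ n ih =>
    rw [Finset.sum_range_succ]
    exact hasSum_natCast_mul_reflectedStep ih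

theorem succ_mul_centralBinom_succ_div_four_pow (k : ℕ) :
    (2 * k + 2) * ((k + 1).centralBinom / 4 ^ (k + 1) : ℝ) =
      (2 * k + 1) * (k.centralBinom / 4 ^ k) := by
  have h : ((k : ℝ) + 1) * (k + 1).centralBinom = 2 * (2 * k + 1) * k.centralBinom := by
    exact_mod_cast Nat.succ_mul_centralBinom_succ k
  rw [pow_succ]
  field_simp
  linear_combination 2 * h

theorem sum_range_reflectedWalkLaw_zero (n : ℕ) :
    ∑ k ∈ Finset.range n, reflectedWalkLaw k 0 =
      n * ((n / 2).centralBinom / 4 ^ (n / 2)) := by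
  induction n with
  | zero => simp
  | succ n ih =>
    rw [Finset.sum_range_succ, ih]
    obtain ⟨k, rfl | rfl⟩ := n.even_or_odd'
    · rw [reflectedWalkLaw_two_mul_zero, show (2 * k + 1) / 2 = k by lia,
        Nat.mul_div_cancel_left k two_pos]
      push_cast
      ring
    · rw [reflectedWalkLaw_eq_zero_of_odd (x := 0) (odd_two_mul_add_one k), add_zero,
        show (2 * k + 1) / 2 = k by lia, show (2 * k + 1 + 1) / 2 = k + 1 by lia]
      push_cast
      linear_combination -succ_mul_centralBinom_succ_div_four_pow k

theorem two_mul_add_one_mul_wallisW (k : ℕ) :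
    (2 * k + 1) * Real.Wallis.W k = (4 ^ k / k.centralBinom : ℝ) ^ 2 := by
  have h : (k.centralBinom : ℝ) = (2 * k).factorial / (k.factorial * k.factorial) := by
    rw [Nat.centralBinom_eq_two_mul_choose, Nat.cast_choose ℝ (by lia), two_mul, Nat.add_sub_cancel]
  rw [Real.Wallis.W_eq_factorial_ratio, h, pow_mul,
    show (2 : ℝ) ^ 4 = 4 ^ 2 by norm_num, pow_right_comm]
  field_simp

theorem tendsto_sqrt_mul_centralBinom_div_four_pow :
    Tendsto (fun k : ℕ => √k * (k.centralBinom / 4 ^ k)) atTop (𝓝 (√(1 / Real.pi))) := by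
  have h := (Stirling.tendsto_self_div_two_mul_self_add_one.div
    Real.Wallis.tendsto_W_nhds_pi_div_two (by positivity)).sqrt
  convert! h using 2 with k
  · have : (k.centralBinom / 4 ^ k : ℝ) = √(1 / ((2 * k + 1) * Real.Wallis.W k)) := by
      rw [two_mul_add_one_mul_wallisW, ← one_div_pow, one_div_div, Real.sqrt_sq (by positivity)]
    rw [this, ← Real.sqrt_mul k.cast_nonneg, mul_one_div, Pi.div_apply, div_div]
  · field_simp

theorem tendsto_natCast_div_const_div_atTop (d : ℕ) :
    Tendsto (fun n : ℕ => ((n / d : ℕ) : ℝ) / n) atTop (𝓝 (1 / d)) := by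
  have h := (tendsto_nat_floor_mul_div_atTop (R := ℝ) (a := 1 / d) (by positivity)).comp
    tendsto_natCast_atTop_atTop
  refine h.congr fun n => ?_
  rw [Function.comp_apply, one_div_mul_eq_div, Nat.floor_div_eq_div]

theorem tendsto_sqrt_mul_centralBinom_half_div_four_pow :
    Tendsto (fun n : ℕ => √n * ((n / 2).centralBinom / 4 ^ (n / 2))) atTop
      (𝓝 (√(2 / Real.pi))) := by
  have ratio : Tendsto (fun n : ℕ => √(n / (n / 2 : ℕ))) atTop (𝓝 √2) := by
    simpa using ((tendsto_natCast_div_const_div_atTop 2).inv₀ (by norm_num)).sqrt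
  have half := tendsto_sqrt_mul_centralBinom_div_four_pow.comp
    (Nat.tendsto_div_const_atTop two_ne_zero)
  have product := ratio.mul half
  rw [← Real.sqrt_mul zero_le_two, mul_one_div] at product
  refine product.congr' ?_
  filter_upwards [eventually_ge_atTop 2] with n hn
  have : (0 : ℝ) < (n / 2 : ℕ) := by exact_mod_cast Nat.div_pos hn two_pos
  rw [Function.comp_apply, ← mul_assoc, ← Real.sqrt_mul (by positivity),
    div_mul_cancel₀ _ this.ne']

/-- For the symmetric nearest-neighbor walk on the nonnegative
integers reflected at the origin (law `P n x = P{S_n = x}` determined by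
`P 1 x = δ_{x,1}` and the stated recurrences), with
`E(S_n) = Σ_{x≥0} x·P_n(x)`, we have `lim_{n→∞} E(S_n)/√n = √(2/π)`. -/
theorem stmt_2 (P : ℕ → ℕ → ℝ)
    (hinit : ∀ x : ℕ, P 1 x = if x = 1 then 1 else 0)
    (h0 : ∀ n : ℕ, 1 ≤ n → P (n + 1) 0 = (1 / 2) * P n 1)
    (h1 : ∀ n : ℕ, 1 ≤ n → P (n + 1) 1 = P n 0 + (1 / 2) * P n 2)
    (hx : ∀ n : ℕ, 1 ≤ n → ∀ x : ℕ, 2 ≤ x →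
      P (n + 1) x = (1 / 2) * P n (x - 1) + (1 / 2) * P n (x + 1))
    (E : ℕ → ℝ) (hE : ∀ n : ℕ, E n = ∑' x : ℕ, (x : ℝ) * P n x) :
    Tendsto (fun n : ℕ => E n / Real.sqrt n) atTop (nhds (Real.sqrt (2 / Real.pi))) := by
  have step : ∀ n, 1 ≤ n → P (n + 1) = reflectedStep (P n) := fun n hn => by
    funext x
    match x with
    | 0 => rw [h0 n hn, reflectedStep]; ring
    | 1 => rw [h1 n hn, reflectedStep]; ring
    | x + 2 => rw [hx n hn (x + 2) (by lia), reflectedStep, show x + 2 - 1 = x + 1 by lia]; ring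
  have initial : P 1 = Pi.single 1 1 := by
    funext x
    rw [hinit, Pi.single_apply]
  refine tendsto_sqrt_mul_centralBinom_half_div_four_pow.congr' ?_
  filter_upwards [eventually_ge_atTop 1] with n hn
  have mean : E n = n * ((n / 2).centralBinom / 4 ^ (n / 2)) := by
    rw [hE, eq_reflectedWalkLaw_of_step initial step hn,
      (hasSum_natCast_mul_reflectedWalkLaw n).tsum_eq, sum_range_reflectedWalkLaw_zero]
  rw [mean, mul_div_right_comm, Real.div_sqrt]
end

section
/- The variance of the position satisfies lim_{n→∞} Var(S_n)/n = 1 − 2/π. -/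
open Filter

open Finset.HasAntidiagonal (antidiagonal mem_antidiagonal)

/-!
The reflected walk is the absolute value of the simple symmetric walk `X` on `ℤ`, so `E(Sₙ²) = n`
and `E(Sₙ) = E|Xₙ|`. A step raises `E|Xₙ|` by exactly `P(Xₙ = 0)`, which vanishes for odd `n` and
equals `C(2m, m) / 4 ^ m` for `n = 2m`. Hence `E|X₂ₘ₊₁| = E|X₂ₘ₊₂| = (2m + 1) C(2m, m) / 4 ^ m`,
whose square is `(2m + 1) / W m` with `W m → π / 2` the Wallis product.
-/

/-- The expectation `E g(Xₙ)` for the simple symmetric random walk `X` on `ℤ` started at `0`: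
the index `(i, j)` stands for the paths with `i` steps up and `j` steps down. -/
noncomputable def walkExpect (n : ℕ) (g : ℤ → ℝ) : ℝ :=
  (∑ ij ∈ antidiagonal n, (n.choose ij.1 : ℝ) * g (ij.1 - ij.2)) / 2 ^ n

lemma walkExpect_zero (g : ℤ → ℝ) : walkExpect 0 g = g 0 := by
  simp [walkExpect]

lemma walkExpect_succ (n : ℕ) (g : ℤ → ℝ) :
    walkExpect (n + 1) g = walkExpect n fun z ↦ (g (z + 1) + g (z - 1)) / 2 := by
  have pascal := Finset.sum_antidiagonal_choose_succ_mul (fun i j ↦ g (i - j)) n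
  have choose_symm : ∑ ij ∈ antidiagonal n, (n.choose ij.2 : ℝ) * g ((ij.1 + 1 : ℕ) - ij.2) =
      ∑ ij ∈ antidiagonal n, (n.choose ij.1 : ℝ) * g ((ij.1 + 1 : ℕ) - ij.2) :=
    Finset.sum_congr rfl fun ij hij ↦ by
      rw [Nat.choose_symm_of_eq_add (mem_antidiagonal.mp hij).symm]
  rw [walkExpect, walkExpect, pascal, choose_symm, ← Finset.sum_add_distrib, pow_succ',
    ← div_div, Finset.sum_div]
  congr 1
  refine Finset.sum_congr rfl fun ij _ ↦ ?_
  rw [show ((ij.1 + 1 : ℕ) : ℤ) - ij.2 = ij.1 - ij.2 + 1 by push_cast; ring,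
    show (ij.1 : ℤ) - (ij.2 + 1 : ℕ) = ij.1 - ij.2 - 1 by push_cast; ring]
  ring

lemma walkExpect_add (n : ℕ) (g h : ℤ → ℝ) :
    walkExpect n (fun z ↦ g z + h z) = walkExpect n g + walkExpect n h := by
  simp only [walkExpect, mul_add, Finset.sum_add_distrib, add_div]

lemma walkExpect_const_mul (n : ℕ) (c : ℝ) (g : ℤ → ℝ) :
    walkExpect n (fun z ↦ c * g z) = c * walkExpect n g := by
  simp only [walkExpect, mul_left_comm _ c, ← Finset.mul_sum, mul_div_assoc]

lemma walkExpect_const (n : ℕ) (c : ℝ) : walkExpect n (fun _ ↦ c) = c := by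
  induction n with
  | zero => exact walkExpect_zero _
  | succ n ih => rw [walkExpect_succ, add_self_div_two, ih]

lemma walkExpect_sq (n : ℕ) : walkExpect n (fun z ↦ (z : ℝ) ^ 2) = n := by
  induction n with
  | zero => simp [walkExpect_zero]
  | succ n ih =>
    have average (z : ℤ) :
        (((z + 1 : ℤ) : ℝ) ^ 2 + ((z - 1 : ℤ) : ℝ) ^ 2) / 2 = (z : ℝ) ^ 2 + 1 := by
      push_cast; ring
    simp only [walkExpect_succ, average, walkExpect_add, ih, walkExpect_const, Nat.cast_add_one]

lemma walkExpect_abs_succ (n : ℕ) :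
    walkExpect (n + 1) (fun z ↦ |(z : ℝ)|) =
      walkExpect n (fun z ↦ |(z : ℝ)|) + walkExpect n (fun z ↦ if z = 0 then 1 else 0) := by
  have average (z : ℤ) :
      (|((z + 1 : ℤ) : ℝ)| + |((z - 1 : ℤ) : ℝ)|) / 2 = |(z : ℝ)| + if z = 0 then 1 else 0 := by
    have int_average : |z + 1| + |z - 1| = 2 * (|z| + if z = 0 then 1 else 0) := by grind
    have := congrArg (Int.cast : ℤ → ℝ) int_average
    push_cast at this ⊢
    linarith
  simp only [walkExpect_succ, average, walkExpect_add]

lemma walkExpect_ite_eq_zero_two_mul (m : ℕ) :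
    walkExpect (2 * m) (fun z ↦ if z = 0 then 1 else 0) = m.centralBinom / 4 ^ m := by
  rw [walkExpect, Finset.sum_eq_single (m, m), Nat.centralBinom, pow_mul]
  · norm_num
  · intro ij hij hne
    rw [mem_antidiagonal] at hij
    have : (ij.1 : ℤ) - ij.2 ≠ 0 := fun h ↦ hne (Prod.ext (by grind) (by grind))
    rw [if_neg this, mul_zero]
  · exact fun h ↦ absurd (mem_antidiagonal.mpr (two_mul m).symm) h

lemma walkExpect_ite_eq_zero_two_mul_add_one (m : ℕ) :
    walkExpect (2 * m + 1) (fun z ↦ if z = 0 then 1 else 0) = 0 := by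
  rw [walkExpect, Finset.sum_eq_zero, zero_div]
  intro ij hij
  rw [mem_antidiagonal] at hij
  rw [if_neg (by omega), mul_zero]

lemma walkExpect_abs_two_mul (m : ℕ) :
    walkExpect (2 * m) (fun z ↦ |(z : ℝ)|) = 2 * m * (m.centralBinom / 4 ^ m) := by
  induction m with
  | zero => simp [walkExpect_zero]
  | succ m ih =>
    have centralBinom_succ : ((m : ℝ) + 1) * (m + 1).centralBinom =
        2 * (2 * m + 1) * m.centralBinom := mod_cast Nat.succ_mul_centralBinom_succ m
    rw [mul_add_one, walkExpect_abs_succ, walkExpect_abs_succ, walkExpect_ite_eq_zero_two_mul,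
      walkExpect_ite_eq_zero_two_mul_add_one, ih, pow_succ, Nat.cast_add_one]
    field_simp
    linear_combination -2 * centralBinom_succ

lemma centralBinom_div_four_pow_sq (m : ℕ) :
    ((m.centralBinom : ℝ) / 4 ^ m) ^ 2 = 1 / ((2 * m + 1) * Real.Wallis.W m) := by
  have centralBinom_eq : (m.centralBinom : ℝ) =
      (2 * m).factorial / (m.factorial * m.factorial) := by
    rw [Nat.centralBinom, two_mul, Nat.cast_add_choose]
  have four_pow : (2 : ℝ) ^ (4 * m) = (4 ^ m) ^ 2 := by
    rw [← pow_mul, show (4 : ℝ) = 2 ^ 2 by norm_num, ← pow_mul]; ring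
  rw [centralBinom_eq, Real.Wallis.W_eq_factorial_ratio, four_pow]
  field_simp

lemma walkExpect_abs_succ_sq (n : ℕ) :
    walkExpect (n + 1) (fun z ↦ |(z : ℝ)|) ^ 2 =
      (2 * (n / 2 : ℕ) + 1) * (Real.Wallis.W (n / 2))⁻¹ := by
  have odd (m : ℕ) : walkExpect (2 * m + 1) (fun z ↦ |(z : ℝ)|) ^ 2 =
      (2 * m + 1) * (Real.Wallis.W m)⁻¹ := by
    rw [walkExpect_abs_succ, walkExpect_abs_two_mul, walkExpect_ite_eq_zero_two_mul, ← add_one_mul,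
      mul_pow, centralBinom_div_four_pow_sq]
    field_simp
  obtain ⟨m, rfl | rfl⟩ := n.even_or_odd'
  · rw [odd, Nat.mul_div_cancel_left m two_pos]
  · rw [walkExpect_abs_succ, walkExpect_ite_eq_zero_two_mul_add_one, add_zero, odd,
      show (2 * m + 1) / 2 = m by omega]

lemma tendsto_two_mul_div_two_add_one_div :
    Tendsto (fun n : ℕ ↦ (2 * (n / 2 : ℕ) + 1 : ℝ) / (n + 1)) atTop (nhds 1) := by
  refine tendsto_of_tendsto_of_tendsto_of_le_of_le (tendsto_natCast_div_add_atTop (1 : ℝ))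
    tendsto_const_nhds (fun n ↦ ?_) (fun n ↦ ?_)
  · have : (n : ℝ) ≤ 2 * (n / 2 : ℕ) + 1 := mod_cast (by omega : n ≤ 2 * (n / 2) + 1)
    dsimp only
    gcongr
  · have : 2 * ((n / 2 : ℕ) : ℝ) ≤ n := mod_cast Nat.mul_div_le n 2
    exact div_le_one_of_le₀ (by linarith) (by positivity)

theorem tendsto_walkExpect_abs_sq_div :
    Tendsto (fun n : ℕ ↦ walkExpect n (fun z ↦ |(z : ℝ)|) ^ 2 / n) atTop
      (nhds (2 / Real.pi)) := by
  have wallis : Tendsto (fun n : ℕ ↦ (Real.Wallis.W (n / 2))⁻¹) atTop (nhds (2 / Real.pi)) := by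
    rw [← inv_div]
    exact (Real.Wallis.tendsto_W_nhds_pi_div_two.comp
      (Nat.tendsto_div_const_atTop two_ne_zero)).inv₀ (by positivity)
  rw [← tendsto_add_atTop_iff_nat 1, ← one_mul (2 / Real.pi)]
  refine (tendsto_two_mul_div_two_add_one_div.mul wallis).congr fun n ↦ ?_
  rw [walkExpect_abs_succ_sq, Nat.cast_add_one, div_mul_eq_mul_div]

/-- `P n` is the law at each time `n ≥ 1` of the simple symmetric random walk on `ℕ` started at
`0` and reflected there. The value of `P 0` is unconstrained. -/
structure IsReflectedWalkLaw (P : ℕ → ℕ → ℝ) : Prop where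
  one_apply : ∀ x, P 1 x = if x = 1 then 1 else 0
  succ_apply_zero : ∀ n, 1 ≤ n → P (n + 1) 0 = 1 / 2 * P n 1
  succ_apply_one : ∀ n, 1 ≤ n → P (n + 1) 1 = P n 0 + 1 / 2 * P n 2
  succ_apply : ∀ n, 1 ≤ n → ∀ x, 2 ≤ x →
    P (n + 1) x = 1 / 2 * P n (x - 1) + 1 / 2 * P n (x + 1)

namespace IsReflectedWalkLaw

variable {P : ℕ → ℕ → ℝ} {n : ℕ}

theorem apply_eq_walkExpect (hP : IsReflectedWalkLaw P) (hn : 1 ≤ n) (x : ℕ) :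
    P n x = walkExpect n fun z ↦ if z.natAbs = x then 1 else 0 := by
  induction n, hn using Nat.le_induction generalizing x with
  | base =>
    rw [hP.one_apply, walkExpect_succ, walkExpect_zero]
    simp [eq_comm]
  | succ n hn ih =>
    obtain rfl | rfl | hx : x = 0 ∨ x = 1 ∨ 2 ≤ x := by omega
    · have average (z : ℤ) : ((if (z + 1).natAbs = 0 then (1 : ℝ) else 0) +
          if (z - 1).natAbs = 0 then 1 else 0) / 2 =
          1 / 2 * (if z.natAbs = 1 then (1 : ℝ) else 0) := by
        grind
      simp only [hP.succ_apply_zero n hn, ih, walkExpect_succ, average,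
        walkExpect_const_mul]
    · have average (z : ℤ) : ((if (z + 1).natAbs = 1 then (1 : ℝ) else 0) +
          if (z - 1).natAbs = 1 then 1 else 0) / 2 =
          (if z.natAbs = 0 then (1 : ℝ) else 0) +
          1 / 2 * (if z.natAbs = 2 then (1 : ℝ) else 0) := by
        grind
      simp only [hP.succ_apply_one n hn, ih, walkExpect_succ, average,
        walkExpect_add, walkExpect_const_mul]
    · have average (z : ℤ) : ((if (z + 1).natAbs = x then (1 : ℝ) else 0) +
          if (z - 1).natAbs = x then 1 else 0) / 2 =
          1 / 2 * (if z.natAbs = x - 1 then (1 : ℝ) else 0) +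
          1 / 2 * (if z.natAbs = x + 1 then (1 : ℝ) else 0) := by
        grind
      simp only [hP.succ_apply n hn x hx, ih, walkExpect_succ, average,
        walkExpect_add, walkExpect_const_mul]

theorem hasSum_mul (hP : IsReflectedWalkLaw P) (hn : 1 ≤ n) (f : ℕ → ℝ) :
    HasSum (fun x ↦ f x * P n x) (walkExpect n fun z ↦ f z.natAbs) := by
  simp only [hP.apply_eq_walkExpect hn, walkExpect, ← mul_div_assoc, Finset.mul_sum]
  refine (hasSum_sum fun ij _ ↦ ?_).div_const _
  convert! hasSum_ite_eq ((ij.1 - ij.2 : ℤ).natAbs)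
    ((n.choose ij.1 : ℝ) * f (ij.1 - ij.2 : ℤ).natAbs) using 2 with x
  grind

theorem tsum_mul_eq_walkExpect_abs (hP : IsReflectedWalkLaw P) (hn : 1 ≤ n) :
    ∑' x : ℕ, (x : ℝ) * P n x = walkExpect n fun z ↦ |(z : ℝ)| := by
  simpa only [Nat.cast_natAbs, Int.cast_abs] using (hP.hasSum_mul hn fun x ↦ x).tsum_eq

theorem tsum_sq_mul (hP : IsReflectedWalkLaw P) (hn : 1 ≤ n) :
    ∑' x : ℕ, (x : ℝ) ^ 2 * P n x = n := by
  calc ∑' x : ℕ, (x : ℝ) ^ 2 * P n x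
    _ = walkExpect n fun z ↦ (z.natAbs : ℝ) ^ 2 := (hP.hasSum_mul hn fun x ↦ (x : ℝ) ^ 2).tsum_eq
    _ = walkExpect n fun z ↦ (z : ℝ) ^ 2 := by simp only [Nat.cast_natAbs, Int.cast_abs, sq_abs]
    _ = n := walkExpect_sq n

end IsReflectedWalkLaw

/-- For the symmetric nearest-neighbor walk on the nonnegative
integers reflected at the origin (law `P n x = P{S_n = x}` determined by
`P 1 x = δ_{x,1}` and the stated recurrences), with
`E(S_n) = Σ_{x≥0} x·P_n(x)` and `Var(S_n) = Σ_{x≥0} x²·P_n(x) − E(S_n)²`,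
we have `lim_{n→∞} Var(S_n)/n = 1 − 2/π`. -/
theorem stmt_3 (P : ℕ → ℕ → ℝ)
    (hinit : ∀ x : ℕ, P 1 x = if x = 1 then 1 else 0)
    (h0 : ∀ n : ℕ, 1 ≤ n → P (n + 1) 0 = (1 / 2) * P n 1)
    (h1 : ∀ n : ℕ, 1 ≤ n → P (n + 1) 1 = P n 0 + (1 / 2) * P n 2)
    (hx : ∀ n : ℕ, 1 ≤ n → ∀ x : ℕ, 2 ≤ x →
      P (n + 1) x = (1 / 2) * P n (x - 1) + (1 / 2) * P n (x + 1))
    (E Var : ℕ → ℝ)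
    (hE : ∀ n : ℕ, E n = ∑' x : ℕ, (x : ℝ) * P n x)
    (hVar : ∀ n : ℕ, Var n = (∑' x : ℕ, (x : ℝ) ^ 2 * P n x) - (E n) ^ 2) :
    Tendsto (fun n : ℕ => Var n / n) atTop (nhds (1 - 2 / Real.pi)) := by
  have hP : IsReflectedWalkLaw P := ⟨hinit, h0, h1, hx⟩
  have var_div_eq : ∀ n : ℕ, 1 ≤ n →
      Var n / n = 1 - walkExpect n (fun z ↦ |(z : ℝ)|) ^ 2 / n := fun n hn ↦ by
    rw [hVar, hE, hP.tsum_sq_mul hn, hP.tsum_mul_eq_walkExpect_abs hn, sub_div,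
      div_self (by positivity)]
  refine (tendsto_walkExpect_abs_sq_div.const_sub 1).congr' ?_
  filter_upwards [eventually_ge_atTop 1] with n hn using (var_div_eq n hn).symm
end

section
/- For every real λ with 0 < λ < 1 and every integer a ≥ 1, the generating function P(λ,a,a) = Σ_{n≥1} λⁿ P_n(a,a) equals (4/λ)/(θ^{a+1} + θ^{−(a+1)}), where θ = (1 − √(1−λ²))/λ. -/
/-!
Let `X` be the simple symmetric walk on `ℤ`, so that `S = |X|`, and let `g x a` be the generating
function of `P{X_n = x, max_{1≤j≤n} |X_j| = a}`; it is half of `P(λ, x, a)` when `x ≥ 1`.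
For `|x| < a` one has `g x a = (λ/2) (g (x - 1) a + g (x + 1) a)`, and `g` is even in `x`, hence
`g x a = g 0 a * T_x(1/λ)` with `T` the Chebyshev polynomials of the first kind. The equation at
`x = a` then becomes `g (a - 1) (a - 1) = g 0 a * T_{a+1}(1/λ)`, so `g a a * T_{a+1}(1/λ)` does not
depend on `a`. Its value is `1/λ`, and `T_n((θ + θ⁻¹)/2) = (θ^n + θ⁻ⁿ)/2` gives the formula.
-/

open Polynomial

section GenFun

variable {𝕜 : Type*} [NormedField 𝕜] {lam : 𝕜} {p q r : ℕ → 𝕜}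

/-- The generating function `∑_{n ≥ 1} λⁿ pₙ` of a sequence, with the term `n = 0` left out because
the law of the walk starts at time one. -/
noncomputable def genFun (lam : 𝕜) (p : ℕ → 𝕜) : 𝕜 :=
  ∑' n : ℕ, lam ^ (n + 1) * p (n + 1)

theorem summable_genFun_of_norm_le [CompleteSpace 𝕜] (hlam : ‖lam‖ < 1) {C : ℝ}
    (hp : ∀ n, 1 ≤ n → ‖p n‖ ≤ C) : Summable fun n : ℕ => lam ^ (n + 1) * p (n + 1) := by
  have geometric : Summable fun n : ℕ => ‖lam‖ ^ (n + 1) * C :=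
    ((summable_nat_add_iff 1).2 (summable_geometric_of_lt_one (norm_nonneg lam) hlam)).mul_right C
  refine geometric.of_norm_bounded fun n => ?_
  rw [norm_mul, norm_pow]
  gcongr
  exact hp (n + 1) (by omega)

theorem genFun_eq_of_average
    (hq : Summable fun n : ℕ => lam ^ (n + 1) * q (n + 1))
    (hr : Summable fun n : ℕ => lam ^ (n + 1) * r (n + 1))
    (h : ∀ n, 1 ≤ n → p (n + 1) = (q n + r n) / 2) :
    genFun lam p = lam * p 1 + lam / 2 * (genFun lam q + genFun lam r) := by
  have tail : HasSum (fun n : ℕ => lam ^ (n + 2) * p (n + 2))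
      (lam / 2 * (genFun lam q + genFun lam r)) := by
    refine ((hq.hasSum.add hr.hasSum).mul_left (lam / 2)).congr_fun fun n => ?_
    rw [h (n + 1) (by omega)]
    ring
  simpa only [genFun, zero_add, pow_one]
    using (tail.zero_add (f := fun n : ℕ => lam ^ (n + 1) * p (n + 1))).tsum_eq

end GenFun

section Chebyshev

theorem eq_mul_eval_chebyshev_T {R : Type*} [CommRing R] {f : ℕ → R} {y : R} {N : ℕ}
    (h_one : 1 ≤ N → f 1 = y * f 0)
    (h_add_two : ∀ k, k + 2 ≤ N → f (k + 2) = 2 * y * f (k + 1) - f k) :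
    ∀ k ≤ N, f k = f 0 * (Chebyshev.T R k).eval y
  | 0, _ => by simp
  | 1, h => by simp [h_one h, mul_comm]
  | k + 2, h => by
    rw [h_add_two k h, eq_mul_eval_chebyshev_T h_one h_add_two k (by omega),
      eq_mul_eval_chebyshev_T h_one h_add_two (k + 1) (by omega)]
    push_cast
    rw [Chebyshev.T_add_two]
    simp only [eval_sub, eval_mul, eval_ofNat, eval_X]
    ring

theorem two_mul_eval_chebyshev_T_half_add_inv {K : Type*} [Field K] [NeZero (2 : K)] {θ : K}
    (hθ : θ ≠ 0) (n : ℕ) :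
    2 * (Chebyshev.T K n).eval ((θ + θ⁻¹) / 2) = θ ^ n + (θ ^ n)⁻¹ := by
  have two_mul_T : (Chebyshev.C K n).eval (2 * ((θ + θ⁻¹) / 2))
      = 2 * (Chebyshev.T K n).eval ((θ + θ⁻¹) / 2) := by
    simpa using congrArg (eval ((θ + θ⁻¹) / 2)) (Chebyshev.C_comp_two_mul_X K n)
  rw [← two_mul_T, mul_div_cancel₀ _ two_ne_zero, ← dickson_one_one_eq_chebyshev_C,
    dickson_one_one_eval_add_inv θ θ⁻¹ (mul_inv_cancel₀ hθ), inv_pow]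

end Chebyshev

/-- The recursive description of the joint law `P n x a = P{S_n = x, A_n = a}` of the reflected
walk and its running maximum. The values may lie in any field, so that the generating function can
be taken at a complex argument. -/
structure IsReflectedWalkLaw_s5 {K : Type*} [Field K] (P : ℕ → ℤ → ℤ → K) : Prop where
  initial : ∀ x a : ℤ, P 1 x a = (if x = 1 then (1 : K) else 0) * (if a = 1 then (1 : K) else 0)
  support : ∀ (n : ℕ) (x a : ℤ), ¬(0 ≤ x ∧ x ≤ a) → P n x a = 0
  step : ∀ (n : ℕ), 1 ≤ n → ∀ (a : ℤ), 1 ≤ a → ∀ (x : ℤ), 0 ≤ x → x ≤ a →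
    P (n + 1) x a
      = (1 / 2) * (1 + (if x = 1 then (1 : K) else 0) - (if x = a + 1 then (1 : K) else 0))
            * P n (x - 1) a
        + (1 / 2) * P n (x + 1) a
        + (1 / 2) * (if x = a then (1 : K) else 0) * (1 - (if a = 1 then (1 : K) else 0))
            * P n (a - 1) (a - 1)

/-- The joint law `P{X_n = x, max_{1≤j≤n} |X_j| = a}` of the simple symmetric walk `X` on `ℤ`,
expressed through the law `P` of the reflected walk `|X|`: the mass at `x ≥ 1` is shared equally
between `x` and `-x`. -/
def unfoldedLaw {K : Type*} [Field K] (P : ℕ → ℤ → ℤ → K) (n : ℕ) (x a : ℤ) : K :=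
  if x = 0 then P n 0 a else P n |x| a / 2

section UnfoldedLaw

variable {K : Type*} [Field K] {P : ℕ → ℤ → ℤ → K}

theorem unfoldedLaw_zero (n : ℕ) (a : ℤ) : unfoldedLaw P n 0 a = P n 0 a :=
  if_pos rfl

theorem unfoldedLaw_of_pos {x : ℤ} (hx : 0 < x) (n : ℕ) (a : ℤ) :
    unfoldedLaw P n x a = P n x a / 2 := by
  rw [unfoldedLaw, if_neg hx.ne', abs_of_pos hx]

theorem unfoldedLaw_neg (n : ℕ) (x a : ℤ) : unfoldedLaw P n (-x) a = unfoldedLaw P n x a := by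
  simp only [unfoldedLaw, neg_eq_zero, abs_neg]

theorem unfoldedLaw_abs (n : ℕ) (x a : ℤ) : unfoldedLaw P n |x| a = unfoldedLaw P n x a := by
  simp only [unfoldedLaw, abs_eq_zero, abs_abs]

end UnfoldedLaw

/-- The generating function `∑_{n ≥ 1} λⁿ P{X_n = x, max_{1≤j≤n} |X_j| = a}` of the unfolded law,
written `g x a` above. -/
noncomputable def unfoldedGenFun {𝕜 : Type*} [NormedField 𝕜] (lam : 𝕜) (P : ℕ → ℤ → ℤ → 𝕜)
    (x a : ℤ) : 𝕜 :=
  genFun lam (unfoldedLaw P · x a)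

theorem unfoldedGenFun_neg {𝕜 : Type*} [NormedField 𝕜] (lam : 𝕜) (P : ℕ → ℤ → ℤ → 𝕜) (x a : ℤ) :
    unfoldedGenFun lam P (-x) a = unfoldedGenFun lam P x a := by
  simp only [unfoldedGenFun, unfoldedLaw_neg]

namespace IsReflectedWalkLaw_s5

section Recursion

variable {K : Type*} [Field K] {P : ℕ → ℤ → ℤ → K} {n : ℕ} {x a : ℤ}

theorem unfoldedLaw_eq_zero_of_lt (hP : IsReflectedWalkLaw_s5 P) (n : ℕ) (hx : 0 ≤ x) (hxa : a < x) :
    unfoldedLaw P n x a = 0 := by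
  rcases hx.eq_or_lt with rfl | hx
  · rw [unfoldedLaw_zero, hP.support n 0 a (by omega)]
  · rw [unfoldedLaw_of_pos hx, hP.support n x a (by omega), zero_div]

theorem unfoldedLaw_one_of_ne (hP : IsReflectedWalkLaw_s5 P) (hx : 0 ≤ x) (h : ¬(x = 1 ∧ a = 1)) :
    unfoldedLaw P 1 x a = 0 := by
  have law_zero : P 1 x a = 0 := by
    rw [hP.initial]
    split_ifs <;> simp_all
  rcases hx.eq_or_lt with rfl | hx
  · rw [unfoldedLaw_zero, law_zero]
  · rw [unfoldedLaw_of_pos hx, law_zero, zero_div]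

theorem unfoldedLaw_one_one_one (hP : IsReflectedWalkLaw_s5 P) : unfoldedLaw P 1 1 1 = 1 / 2 := by
  rw [unfoldedLaw_of_pos one_pos, hP.initial, if_pos rfl, one_mul]

theorem unfoldedLaw_succ [NeZero (2 : K)] (hP : IsReflectedWalkLaw_s5 P) (hn : 1 ≤ n) (hx : 0 ≤ x)
    (hxa : x < a) :
    unfoldedLaw P (n + 1) x a = (unfoldedLaw P n (x - 1) a + unfoldedLaw P n (x + 1) a) / 2 := by
  have step := hP.step n hn a (by omega) x hx hxa.le
  rw [if_neg (show x ≠ a + 1 by omega), if_neg hxa.ne] at step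
  obtain rfl | rfl | hx : x = 0 ∨ x = 1 ∨ 1 < x := by omega
  · rw [zero_sub, zero_add, unfoldedLaw_neg, unfoldedLaw_zero, unfoldedLaw_of_pos one_pos, step,
      hP.support n (0 - 1) a (by omega), zero_add]
    field_simp
    ring
  · rw [sub_self, unfoldedLaw_zero, unfoldedLaw_of_pos one_pos, unfoldedLaw_of_pos (by norm_num),
      step, if_pos rfl, sub_self]
    field_simp
    ring
  · rw [unfoldedLaw_of_pos (by omega), unfoldedLaw_of_pos (by omega),
      unfoldedLaw_of_pos (by omega), step, if_neg hx.ne']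
    ring

theorem unfoldedLaw_succ_self (hP : IsReflectedWalkLaw_s5 P) (hn : 1 ≤ n) (ha : 2 ≤ a) :
    unfoldedLaw P (n + 1) a a
      = (unfoldedLaw P n (a - 1) a + unfoldedLaw P n (a - 1) (a - 1)) / 2 := by
  have step := hP.step n hn a (by omega) a (by omega) le_rfl
  rw [if_neg (show a ≠ a + 1 by omega), if_neg (show a ≠ 1 by omega), if_pos rfl,
    hP.support n (a + 1) a (by omega)] at step
  rw [unfoldedLaw_of_pos (by omega), unfoldedLaw_of_pos (by omega), unfoldedLaw_of_pos (by omega),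
    step]
  ring

theorem unfoldedLaw_succ_one_one [NeZero (2 : K)] (hP : IsReflectedWalkLaw_s5 P) (hn : 1 ≤ n) :
    unfoldedLaw P (n + 1) 1 1 = unfoldedLaw P n 0 1 / 2 := by
  have step := hP.step n hn 1 le_rfl 1 zero_le_one le_rfl
  rw [if_pos rfl, if_neg (by norm_num), hP.support n (1 + 1) 1 (by omega), sub_self,
    sub_self] at step
  rw [unfoldedLaw_of_pos one_pos, unfoldedLaw_zero, step]
  field_simp
  ring

end Recursion

section GenFun

variable {𝕜 : Type*} [RCLike 𝕜] {P : ℕ → ℤ → ℤ → 𝕜} {lam : 𝕜}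

theorem norm_unfoldedLaw_le_one (hP : IsReflectedWalkLaw_s5 P) {n : ℕ} (hn : 1 ≤ n) :
    ∀ a : ℤ, 1 ≤ a → ∀ x : ℤ, ‖unfoldedLaw P n x a‖ ≤ 1 := by
  have average_le : ∀ u v : 𝕜, ‖u‖ ≤ 1 → ‖v‖ ≤ 1 → ‖(u + v) / 2‖ ≤ 1 := fun u v hu hv => by
    rw [norm_div, RCLike.norm_two]
    linarith [norm_add_le u v]
  induction n, hn using Nat.le_induction with
  | base =>
    intro a _ x
    rw [← unfoldedLaw_abs]
    by_cases h : |x| = 1 ∧ a = 1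
    · rw [h.1, h.2, hP.unfoldedLaw_one_one_one]
      norm_num
    · simp [hP.unfoldedLaw_one_of_ne (abs_nonneg x) h]
  | succ n hn ih =>
    intro a ha x
    rw [← unfoldedLaw_abs]
    have hx := abs_nonneg x
    generalize |x| = x at hx ⊢
    obtain hxa | rfl | hxa := lt_trichotomy x a
    · rw [hP.unfoldedLaw_succ hn hx hxa]
      exact average_le _ _ (ih a ha _) (ih a ha _)
    · obtain rfl | ha := ha.eq_or_lt
      · rw [hP.unfoldedLaw_succ_one_one hn, ← add_zero (unfoldedLaw P n 0 1)]
        exact average_le _ _ (ih 1 le_rfl 0) (by simp)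
      · rw [hP.unfoldedLaw_succ_self hn ha]
        exact average_le _ _ (ih x (by omega) _) (ih (x - 1) (by omega) _)
    · simp [hP.unfoldedLaw_eq_zero_of_lt (n + 1) hx hxa]

theorem summable_unfoldedLaw (hP : IsReflectedWalkLaw_s5 P) (hlam : ‖lam‖ < 1) {a : ℤ} (ha : 1 ≤ a)
    (x : ℤ) : Summable fun n : ℕ => lam ^ (n + 1) * unfoldedLaw P (n + 1) x a :=
  summable_genFun_of_norm_le (p := (unfoldedLaw P · x a)) hlam
    fun _ hn => hP.norm_unfoldedLaw_le_one hn a ha x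

theorem unfoldedGenFun_of_lt (hP : IsReflectedWalkLaw_s5 P) (hlam : ‖lam‖ < 1) {x a : ℤ} (hx : 0 ≤ x)
    (hxa : x < a) :
    unfoldedGenFun lam P x a
      = lam / 2 * (unfoldedGenFun lam P (x - 1) a + unfoldedGenFun lam P (x + 1) a) := by
  have h := genFun_eq_of_average (p := (unfoldedLaw P · x a)) (q := (unfoldedLaw P · (x - 1) a))
    (r := (unfoldedLaw P · (x + 1) a)) (hP.summable_unfoldedLaw hlam (by omega) (x - 1))
    (hP.summable_unfoldedLaw hlam (by omega) (x + 1)) fun _ hn => hP.unfoldedLaw_succ hn hx hxa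
  rwa [hP.unfoldedLaw_one_of_ne hx (by omega), mul_zero, zero_add] at h

theorem unfoldedGenFun_self (hP : IsReflectedWalkLaw_s5 P) (hlam : ‖lam‖ < 1) {a : ℤ} (ha : 2 ≤ a) :
    unfoldedGenFun lam P a a
      = lam / 2 * (unfoldedGenFun lam P (a - 1) a + unfoldedGenFun lam P (a - 1) (a - 1)) := by
  have h := genFun_eq_of_average (p := (unfoldedLaw P · a a)) (q := (unfoldedLaw P · (a - 1) a))
    (r := (unfoldedLaw P · (a - 1) (a - 1))) (hP.summable_unfoldedLaw hlam (by omega) (a - 1))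
    (hP.summable_unfoldedLaw hlam (by omega) (a - 1)) fun _ hn => hP.unfoldedLaw_succ_self hn ha
  rwa [hP.unfoldedLaw_one_of_ne (by omega) (by omega), mul_zero, zero_add] at h

theorem unfoldedGenFun_one_one (hP : IsReflectedWalkLaw_s5 P) (hlam : ‖lam‖ < 1) :
    unfoldedGenFun lam P 1 1 = lam / 2 * (unfoldedGenFun lam P 0 1 + 1) := by
  have h := genFun_eq_of_average (p := (unfoldedLaw P · 1 1)) (q := (unfoldedLaw P · 0 1)) (r := 0)
    (hP.summable_unfoldedLaw hlam le_rfl 0)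
    (by simp) fun _ hn => by simp only [hP.unfoldedLaw_succ_one_one hn, Pi.zero_apply, add_zero]
  simp only [hP.unfoldedLaw_one_one_one, genFun, Pi.zero_apply, mul_zero, tsum_zero] at h
  rw [unfoldedGenFun, unfoldedGenFun, genFun, genFun, h]
  ring

theorem unfoldedGenFun_eq_mul_eval_T (hP : IsReflectedWalkLaw_s5 P) (hlam₀ : lam ≠ 0)
    (hlam : ‖lam‖ < 1) {k a : ℕ} (hka : k ≤ a) :
    unfoldedGenFun lam P k a = unfoldedGenFun lam P 0 a * (Chebyshev.T 𝕜 k).eval lam⁻¹ := by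
  refine eq_mul_eval_chebyshev_T (f := fun k : ℕ => unfoldedGenFun lam P k a) (fun ha => ?_)
    (fun k hk => ?_) k hka
  · have origin := hP.unfoldedGenFun_of_lt hlam (x := 0) (a := a) le_rfl (by omega)
    rw [zero_sub, unfoldedGenFun_neg] at origin
    simp only [Nat.cast_one, Nat.cast_zero]
    rw [origin, zero_add]
    field_simp
    ring
  · have interior := hP.unfoldedGenFun_of_lt hlam (x := k + 1) (a := a) (by omega) (by omega)
    rw [add_sub_cancel_right, add_assoc, one_add_one_eq_two] at interior
    push_cast
    rw [interior]
    field_simp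
    ring

theorem unfoldedGenFun_zero_mul_eval_T_succ (hP : IsReflectedWalkLaw_s5 P) (hlam₀ : lam ≠ 0)
    (hlam : ‖lam‖ < 1) {a : ℕ} (ha : 1 ≤ a) :
    lam / 2 * (unfoldedGenFun lam P 0 a * (Chebyshev.T 𝕜 (a + 1)).eval lam⁻¹)
      = unfoldedGenFun lam P a a - lam / 2 * unfoldedGenFun lam P (a - 1) a := by
  have pred := hP.unfoldedGenFun_eq_mul_eval_T hlam₀ hlam (Nat.sub_le a 1)
  rw [Nat.cast_pred ha] at pred
  rw [hP.unfoldedGenFun_eq_mul_eval_T hlam₀ hlam le_rfl, pred, Chebyshev.T_add_one]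
  simp only [eval_sub, eval_mul, eval_ofNat, eval_X]
  field_simp

theorem unfoldedGenFun_self_mul_eval_T (hP : IsReflectedWalkLaw_s5 P) (hlam₀ : lam ≠ 0)
    (hlam : ‖lam‖ < 1) {a : ℕ} (ha : 1 ≤ a) :
    unfoldedGenFun lam P a a * (Chebyshev.T 𝕜 (a + 1)).eval lam⁻¹ = lam⁻¹ := by
  have half_ne_zero : lam / 2 ≠ 0 := div_ne_zero hlam₀ two_ne_zero
  have diagonal := fun b : ℕ => hP.unfoldedGenFun_eq_mul_eval_T hlam₀ hlam (le_refl b)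
  induction a, ha using Nat.le_induction with
  | base =>
    have origin : unfoldedGenFun lam P 0 1 * (Chebyshev.T 𝕜 (1 + 1)).eval lam⁻¹ = 1 := by
      have h := hP.unfoldedGenFun_zero_mul_eval_T_succ hlam₀ hlam le_rfl
      rw [Nat.cast_one, sub_self, hP.unfoldedGenFun_one_one hlam] at h
      exact mul_left_cancel₀ half_ne_zero (h.trans (by ring))
    rw [diagonal, Nat.cast_one, mul_right_comm, origin, Chebyshev.T_one, eval_X, one_mul]
  | succ a ha ih =>
    have origin : unfoldedGenFun lam P 0 (a + 1 : ℕ) * (Chebyshev.T 𝕜 ((a + 1 : ℕ) + 1)).eval lam⁻¹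
        = unfoldedGenFun lam P a a := by
      have h := hP.unfoldedGenFun_zero_mul_eval_T_succ hlam₀ hlam (Nat.le_add_left 1 a)
      rw [hP.unfoldedGenFun_self hlam (by omega), mul_add, add_sub_cancel_left, Nat.cast_succ,
        add_sub_cancel_right] at h
      exact mul_left_cancel₀ half_ne_zero h
    rw [diagonal, mul_right_comm, origin, Nat.cast_succ, ih]

end GenFun

end IsReflectedWalkLaw_s5

theorem mul_sq_add_one_eq_two_mul_of_sqrt {lam : ℝ} (hlam₀ : lam ≠ 0) (hlam : |lam| ≤ 1) :
    lam * (((1 - √(1 - lam ^ 2)) / lam) ^ 2 + 1) = 2 * ((1 - √(1 - lam ^ 2)) / lam) := by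
  have sq_sqrt : √(1 - lam ^ 2) ^ 2 = 1 - lam ^ 2 :=
    Real.sq_sqrt (sub_nonneg.2 ((sq_le_one_iff_abs_le_one lam).2 hlam))
  field_simp
  linear_combination sq_sqrt

theorem stmt_5_general {𝕜 : Type*} [RCLike 𝕜] {P : ℕ → ℤ → ℤ → 𝕜} (hP : IsReflectedWalkLaw_s5 P)
    {lam θ : 𝕜} (hlam₀ : lam ≠ 0) (hlam : ‖lam‖ < 1) (hθ : lam * (θ ^ 2 + 1) = 2 * θ)
    {a : ℕ} (ha : 1 ≤ a) :
    HasSum (fun n : ℕ => lam ^ (n + 1) * P (n + 1) a a)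
      (4 / lam / (θ ^ ((a : ℤ) + 1) + θ ^ (-((a : ℤ) + 1)))) := by
  have hθ₀ : θ ≠ 0 := by
    rintro rfl
    simp [hlam₀] at hθ
  have lam_inv : lam⁻¹ = (θ + θ⁻¹) / 2 := by
    field_simp
    linear_combination -hθ
  have chebyshev := two_mul_eval_chebyshev_T_half_add_inv hθ₀ (a + 1)
  rw [← lam_inv] at chebyshev
  have diagonal := hP.unfoldedGenFun_self_mul_eval_T hlam₀ hlam ha
  have value : 2 * unfoldedGenFun lam P a a
      = 4 / lam / (θ ^ ((a : ℤ) + 1) + θ ^ (-((a : ℤ) + 1))) := by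
    rw [zpow_neg, ← Nat.cast_succ, zpow_natCast, ← chebyshev, Nat.cast_succ]
    have T_ne_zero := right_ne_zero_of_mul (diagonal.trans_ne (inv_ne_zero hlam₀))
    rw [eq_div_iff (mul_ne_zero two_ne_zero T_ne_zero)]
    linear_combination 4 * diagonal
  rw [← value]
  refine ((hP.summable_unfoldedLaw hlam (by omega) a).hasSum.mul_left 2).congr_fun fun n => ?_
  rw [unfoldedLaw_of_pos (by omega)]
  field_simp

/-- For the symmetric reflected walk with running maximum (joint
law `P n x a = P{S_n = x, A_n = a}` as specified), for every `0 < λ < 1` and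
every integer `a ≥ 1`, the generating function `P(λ,a,a) = Σ_{n≥1} λⁿ P_n(a,a)`
equals `(4/λ)/(θ^{a+1} + θ^{−(a+1)})` where `θ = (1 − √(1−λ²))/λ`. -/
theorem stmt_5 (P : ℕ → ℤ → ℤ → ℝ)
    (hinit : ∀ x a : ℤ, P 1 x a = (if x = 1 then (1 : ℝ) else 0) * (if a = 1 then (1 : ℝ) else 0))
    (hsupp : ∀ (n : ℕ) (x a : ℤ), ¬(0 ≤ x ∧ x ≤ a) → P n x a = 0)
    (hrec : ∀ (n : ℕ), 1 ≤ n → ∀ (a : ℤ), 1 ≤ a → ∀ (x : ℤ), 0 ≤ x → x ≤ a →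
      P (n + 1) x a
        = (1 / 2) * (1 + (if x = 1 then (1 : ℝ) else 0) - (if x = a + 1 then (1 : ℝ) else 0))
              * P n (x - 1) a
          + (1 / 2) * P n (x + 1) a
          + (1 / 2) * (if x = a then (1 : ℝ) else 0) * (1 - (if a = 1 then (1 : ℝ) else 0))
              * P n (a - 1) (a - 1))
    (lam : ℝ) (hlam : 0 < lam ∧ lam < 1)
    (θ : ℝ) (hθ : θ = (1 - Real.sqrt (1 - lam ^ 2)) / lam)
    (a : ℕ) (ha : 1 ≤ a) :
    ∑' n : ℕ, lam ^ (n + 1) * P (n + 1) (a : ℤ) (a : ℤ)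
      = (4 / lam) / (θ ^ ((a : ℤ) + 1) + θ ^ (-((a : ℤ) + 1))) := by
  subst hθ
  have abs_lam : |lam| < 1 := abs_lt.2 ⟨by linarith, hlam.2⟩
  exact (stmt_5_general ⟨hinit, hsupp, hrec⟩ hlam.1.ne' abs_lam
    (mul_sq_add_one_eq_two_mul_of_sqrt hlam.1.ne' abs_lam.le) ha).tsum_eq
end

section
/- Generalized Abel limit theorem: let p ≥ 0 be a real number, (a_n)_{n≥1} a real sequence, and C a real number such that a_n/n^{p} → C as n → ∞. Then lim_{λ→1⁻} (1−λ)^{1+p} Σ_{n≥1} a_n λⁿ = C·Γ(p+1). -/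
open Filter

/-!
For `s = p + 1 > 0` the binomial series says that the negative binomial weights
`(1 - x) ^ s * (multichoose s n * x ^ n)` are nonnegative with total mass `1`, and each of them
vanishes as `x → 1⁻`. Averages against such weights preserve limits (Silverman–Toeplitz), and by
Euler's limit formula `n ^ p / multichoose s n → Γ(s)`, so the average of `a n / multichoose s n`,
which is `(1 - x) ^ s * ∑ a n * x ^ n`, tends to `Γ(s) * C`.
-/

open Topology Ring

section Toeplitz

variable {ι κ 𝕜 E : Type*} [NormedField 𝕜] [NormedAddCommGroup E] [NormedSpace 𝕜 E]

theorem norm_tsum_smul_le_sum_add_mul_tsum {w : κ → 𝕜} {u : κ → E} {s : Finset κ} {δ : ℝ}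
    (hw : Summable fun n ↦ ‖w n‖) (hδ : 0 ≤ δ) (hu : ∀ n ∉ s, ‖u n‖ ≤ δ) :
    ‖∑' n, w n • u n‖ ≤ ∑ n ∈ s, ‖w n‖ * ‖u n‖ + δ * ∑' n, ‖w n‖ := by
  classical
  let head : κ → ℝ := fun n ↦ if n ∈ s then ‖w n‖ * ‖u n‖ else 0
  have hhead : HasSum head (∑ n ∈ s, ‖w n‖ * ‖u n‖) := by
    rw [← Finset.sum_congr rfl fun n hn ↦ if_pos hn]
    exact hasSum_sum_of_ne_finset_zero fun n hn ↦ if_neg hn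
  refine tsum_of_norm_bounded (hhead.add (hw.hasSum.mul_left δ)) fun n ↦ ?_
  rw [norm_smul]
  by_cases hn : n ∈ s
  · simpa only [head, if_pos hn] using le_add_of_nonneg_right (by positivity)
  · simpa only [head, if_neg hn, zero_add, mul_comm δ] using
      mul_le_mul_of_nonneg_left (hu n hn) (norm_nonneg (w n))

theorem tendsto_tsum_smul_zero {l : Filter ι} {w : ι → κ → 𝕜} {u : κ → E} {M : ℝ}
    (hw : ∀ᶠ i in l, Summable fun n ↦ ‖w i n‖) (hM : ∀ᶠ i in l, ∑' n, ‖w i n‖ ≤ M)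
    (hw₀ : ∀ n, Tendsto (w · n) l (𝓝 0)) (hu : Tendsto u cofinite (𝓝 0)) :
    Tendsto (fun i ↦ ∑' n, w i n • u n) l (𝓝 0) := by
  rw [NormedAddGroup.tendsto_nhds_zero]
  intro ε hε
  obtain ⟨δ, hδ, hMδ⟩ := exists_pos_mul_lt (half_pos hε) M
  have hlarge : {n | ¬‖u n‖ < δ}.Finite :=
    NormedAddGroup.tendsto_nhds_zero.1 hu δ hδ
  have hhead : Tendsto (fun i ↦ ∑ n ∈ hlarge.toFinset, ‖w i n‖ * ‖u n‖) l (𝓝 0) := by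
    simpa using tendsto_finsetSum hlarge.toFinset fun n _ ↦ (hw₀ n).norm.mul_const ‖u n‖
  filter_upwards [hw, hM, hhead.eventually_lt_const (half_pos hε)] with i hwi hMi hheadi
  calc ‖∑' n, w i n • u n‖
      ≤ ∑ n ∈ hlarge.toFinset, ‖w i n‖ * ‖u n‖ + δ * ∑' n, ‖w i n‖ :=
        norm_tsum_smul_le_sum_add_mul_tsum hwi hδ.le fun n hn ↦ by
          by_contra! hδn
          exact hn (hlarge.mem_toFinset.2 hδn.not_gt)
    _ ≤ ∑ n ∈ hlarge.toFinset, ‖w i n‖ * ‖u n‖ + M * δ := by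
        rw [mul_comm M]
        gcongr
    _ < ε := by linarith

/-- The sufficiency half of the **Silverman–Toeplitz theorem**. -/
theorem tendsto_tsum_smul_of_tendsto_cofinite [CompleteSpace 𝕜] [CompleteSpace E] {l : Filter ι}
    {w : ι → κ → 𝕜} {u : κ → E} {M : ℝ} {c : 𝕜} {L : E}
    (hw : ∀ᶠ i in l, Summable fun n ↦ ‖w i n‖) (hM : ∀ᶠ i in l, ∑' n, ‖w i n‖ ≤ M)
    (hw₀ : ∀ n, Tendsto (w · n) l (𝓝 0)) (hc : Tendsto (fun i ↦ ∑' n, w i n) l (𝓝 c))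
    (hu : Tendsto u cofinite (𝓝 L)) :
    Tendsto (fun i ↦ ∑' n, w i n • u n) l (𝓝 (c • L)) := by
  have hu₀ : Tendsto (fun n ↦ u n - L) cofinite (𝓝 0) := tendsto_sub_nhds_zero_iff.2 hu
  have hsplit := (tendsto_tsum_smul_zero hw hM hw₀ hu₀).add (hc.smul_const L)
  rw [zero_add] at hsplit
  refine hsplit.congr' ?_
  filter_upwards [hw] with i hwi
  obtain ⟨B, hB⟩ := hu₀.norm.bddAbove_range_of_cofinite
  have hdiff : Summable fun n ↦ w i n • (u n - L) :=
    .of_norm_bounded (hwi.mul_right B) fun n ↦ by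
      rw [norm_smul]
      exact mul_le_mul_of_nonneg_left (hB ⟨n, rfl⟩) (norm_nonneg _)
  rw [← hwi.of_norm.tsum_smul_const L, ← hdiff.tsum_add (hwi.of_norm.smul_const L)]
  simp only [← smul_add, sub_add_cancel]

end Toeplitz

section Multichoose

theorem multichoose_eq_ascPochhammer_eval_div_factorial (s : ℝ) (n : ℕ) :
    multichoose s n = (ascPochhammer ℝ n).eval s / n.factorial := by
  rw [eq_div_iff (by positivity), mul_comm, ← nsmul_eq_mul,
    factorial_nsmul_multichoose_eq_ascPochhammer, Polynomial.ascPochhammer_smeval_eq_eval]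

theorem multichoose_pos {s : ℝ} (hs : 0 < s) (n : ℕ) : 0 < multichoose s n := by
  rw [multichoose_eq_ascPochhammer_eval_div_factorial]
  exact div_pos (ascPochhammer_pos n s hs) (by positivity)

theorem hasSum_multichoose_mul_pow (s : ℝ) {x : ℝ} (hx : |x| < 1) :
    HasSum (fun n ↦ multichoose s n * x ^ n) ((1 - x) ^ s)⁻¹ := by
  have hmem : x ∈ Metric.eball (0 : ℝ) 1 := by
    rw [← ENNReal.ofReal_one, Metric.eball_ofReal]
    simpa using hx
  simpa [FormalMultilinearSeries.ofScalars, multichoose_eq, mul_comm] using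
    (Real.one_div_one_sub_rpow_hasFPowerSeriesOnBall_zero s).hasSum hmem

theorem ascPochhammer_eval_eq_prod_range {R : Type*} [CommSemiring R] (n : ℕ) (r : R) :
    (ascPochhammer R n).eval r = ∏ j ∈ Finset.range n, (r + j) := by
  induction n with
  | zero => simp
  | succ n ih => rw [ascPochhammer_succ_eval, ih, Finset.prod_range_succ]

theorem gammaSeq_eq_rpow_div_multichoose (s : ℝ) (n : ℕ) :
    Real.GammaSeq s n = (n : ℝ) ^ s / (multichoose s n * (s + n)) := by
  rw [Real.GammaSeq, ← ascPochhammer_eval_eq_prod_range, ascPochhammer_succ_eval,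
    multichoose_eq_ascPochhammer_eval_div_factorial, div_mul_eq_mul_div, div_div_eq_mul_div]

theorem tendsto_rpow_div_multichoose (s : ℝ) :
    Tendsto (fun n : ℕ ↦ (n : ℝ) ^ (s - 1) / multichoose s n) atTop (𝓝 (Real.Gamma s)) := by
  have hratio : Tendsto (fun n : ℕ ↦ s / (n : ℝ) + 1) atTop (𝓝 1) := by
    simpa using (tendsto_const_div_atTop_nhds_zero_nat s).add_const 1
  have hGamma := (Real.GammaSeq_tendsto_Gamma s).mul hratio
  rw [mul_one] at hGamma
  refine hGamma.congr' ?_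
  filter_upwards [eventually_gt_atTop 0,
    tendsto_natCast_atTop_atTop.eventually_gt_atTop (-s)] with n hn hsn
  have hn' : (n : ℝ) ≠ 0 := Nat.cast_ne_zero.2 hn.ne'
  have hsn' : s + n ≠ 0 := by linarith
  rw [gammaSeq_eq_rpow_div_multichoose, Real.rpow_sub_one hn']
  field_simp

end Multichoose

/-- The probability of `n` under the negative binomial distribution with (real) size parameter `s`
and success probability `1 - x`. These are the weights that turn `(1 - x) ^ s * ∑ a n * x ^ n` into
an average of the sequence `a n / multichoose s n`. -/
noncomputable def negBinomialWeight (s x : ℝ) (n : ℕ) : ℝ :=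
  (1 - x) ^ s * (multichoose s n * x ^ n)

namespace negBinomialWeight

variable {s : ℝ}

theorem nonneg (hs : 0 < s) {x : ℝ} (hx : x ∈ Set.Ioo 0 1) (n : ℕ) :
    0 ≤ negBinomialWeight s x n :=
  mul_nonneg (Real.rpow_nonneg (sub_nonneg.2 hx.2.le) s)
    (mul_nonneg (multichoose_pos hs n).le (pow_nonneg hx.1.le n))

theorem hasSum_one (s : ℝ) {x : ℝ} (hx : |x| < 1) : HasSum (negBinomialWeight s x) 1 := by
  have hpos : 0 < (1 - x) ^ s := Real.rpow_pos_of_pos (sub_pos.2 (abs_lt.1 hx).2) s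
  rw [← mul_inv_cancel₀ hpos.ne']
  exact (hasSum_multichoose_mul_pow s hx).mul_left ((1 - x) ^ s)

theorem tendsto_zero (hs : 0 < s) (n : ℕ) :
    Tendsto (negBinomialWeight s · n) (𝓝[<] 1) (𝓝 0) := by
  have hcont : ContinuousAt (negBinomialWeight s · n) 1 := by
    have hrpow : ContinuousAt (fun x : ℝ ↦ (1 - x) ^ s) 1 :=
      (by fun_prop : ContinuousAt (fun x : ℝ ↦ 1 - x) 1).rpow_const (.inr hs.le)
    unfold negBinomialWeight
    fun_prop
  simpa [negBinomialWeight, Real.zero_rpow hs.ne'] using hcont.tendsto.mono_left nhdsWithin_le_nhds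

variable {E : Type*} [NormedAddCommGroup E] [NormedSpace ℝ E]

theorem tendsto_tsum_succ_smul [CompleteSpace E] (hs : 0 < s) {u : ℕ → E} {L : E}
    (hu : Tendsto u atTop (𝓝 L)) :
    Tendsto (fun x ↦ ∑' n, negBinomialWeight s x (n + 1) • u (n + 1)) (𝓝[<] 1) (𝓝 L) := by
  have hunit : ∀ᶠ x : ℝ in 𝓝[<] 1, x ∈ Set.Ioo 0 1 := Ioo_mem_nhdsLT one_pos
  have htail {x : ℝ} (hx : x ∈ Set.Ioo 0 1) :
      HasSum (fun n ↦ negBinomialWeight s x (n + 1)) (1 - negBinomialWeight s x 0) := by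
    simpa using (hasSum_nat_add_iff' 1).2 (hasSum_one s (abs_lt.2 ⟨by linarith [hx.1], hx.2⟩))
  have hnorm {x : ℝ} (hx : x ∈ Set.Ioo 0 1) (n : ℕ) :
      ‖negBinomialWeight s x n‖ = negBinomialWeight s x n := Real.norm_of_nonneg (nonneg hs hx n)
  have hmass : Tendsto (fun x ↦ ∑' n, negBinomialWeight s x (n + 1)) (𝓝[<] 1) (𝓝 1) := by
    have := (tendsto_zero hs 0).const_sub 1
    rw [sub_zero] at this
    exact this.congr' (hunit.mono fun x hx ↦ (htail hx).tsum_eq.symm)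
  rw [← one_smul ℝ L]
  refine tendsto_tsum_smul_of_tendsto_cofinite (M := 1) ?_ ?_ (fun n ↦ tendsto_zero hs (n + 1))
    hmass (Nat.cofinite_eq_atTop ▸ (tendsto_add_atTop_iff_nat 1).2 hu)
  · filter_upwards [hunit] with x hx
    simpa only [hnorm hx] using (htail hx).summable
  · filter_upwards [hunit] with x hx
    simpa only [hnorm hx, (htail hx).tsum_eq] using sub_le_self 1 (nonneg hs hx 0)

theorem tsum_succ_smul_inv_multichoose_smul (hs : 0 < s) (a : ℕ → E) (x : ℝ) :
    ∑' n, negBinomialWeight s x (n + 1) • (multichoose s (n + 1))⁻¹ • a (n + 1) =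
      (1 - x) ^ s • ∑' n, x ^ (n + 1) • a (n + 1) := by
  rw [← tsum_const_smul'']
  refine tsum_congr fun n ↦ ?_
  have hne := (multichoose_pos hs (n + 1)).ne'
  rw [smul_smul, smul_smul, negBinomialWeight]
  congr 1
  field_simp

end negBinomialWeight

theorem tendsto_inv_multichoose_smul {E : Type*} [NormedAddCommGroup E] [NormedSpace ℝ E]
    {p : ℝ} {a : ℕ → E} {C : E}
    (h : Tendsto (fun n : ℕ ↦ ((n : ℝ) ^ p)⁻¹ • a n) atTop (𝓝 C)) :
    Tendsto (fun n ↦ (multichoose (p + 1) n)⁻¹ • a n) atTop (𝓝 (Real.Gamma (p + 1) • C)) := by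
  refine ((tendsto_rpow_div_multichoose (p + 1)).smul h).congr' ?_
  filter_upwards [eventually_gt_atTop 0] with n hn
  have hne : (n : ℝ) ^ p ≠ 0 := (Real.rpow_pos_of_pos (Nat.cast_pos.2 hn) p).ne'
  rw [add_sub_cancel_right, smul_smul, div_mul_eq_mul_div, mul_inv_cancel₀ hne, one_div]

theorem stmt_10_general {E : Type*} [NormedAddCommGroup E] [NormedSpace ℝ E] [CompleteSpace E]
    {p : ℝ} (hp : -1 < p) {a : ℕ → E} {C : E}
    (h : Tendsto (fun n : ℕ ↦ ((n : ℝ) ^ p)⁻¹ • a n) atTop (𝓝 C)) :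
    Tendsto (fun x : ℝ ↦ (1 - x) ^ (p + 1) • ∑' n : ℕ, x ^ (n + 1) • a (n + 1)) (𝓝[<] 1)
      (𝓝 (Real.Gamma (p + 1) • C)) := by
  have hs : 0 < p + 1 := by linarith
  simpa only [negBinomialWeight.tsum_succ_smul_inv_multichoose_smul hs] using
    negBinomialWeight.tendsto_tsum_succ_smul hs (tendsto_inv_multichoose_smul h)

/-- generalized Abel limit theorem: let `p ≥ 0` be real,
`(a_n)_{n≥1}` a real sequence and `C` a real number with `a_n/n^p → C` as
`n → ∞`. Then `lim_{λ→1⁻} (1−λ)^{1+p} Σ_{n≥1} a_n λⁿ = C·Γ(p+1)`. -/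
theorem stmt_10 (p : ℝ) (hp : 0 ≤ p) (a : ℕ → ℝ) (C : ℝ)
    (h : Tendsto (fun n : ℕ => a n / (n : ℝ) ^ p) atTop (nhds C)) :
    Tendsto (fun lam : ℝ => (1 - lam) ^ (1 + p) * ∑' n : ℕ, a (n + 1) * lam ^ (n + 1))
      (nhdsWithin 1 (Set.Ioo 0 1)) (nhds (C * Real.Gamma (p + 1))) := by
  simp only [div_eq_inv_mul] at h
  simpa only [smul_eq_mul, mul_comm, add_comm, nhdsWithin_Ioo_eq_nhdsLT one_pos] using
    stmt_10_general (neg_one_lt_zero.trans_le hp) h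
end

section
/- For every integer k ≥ 1, lim_{t→0⁺} t^{k} Σ_{a≥1} C(a,k−1)/cosh(a t) = (1/(k−1)!) ∫_0^∞ b^{k−1}/cosh(b) db, where C(a,k−1) is the binomial coefficient. -/
open Filter

/-!
Put `w n = C(n, k - 1) / n ^ (k - 1)` and `f x = x ^ (k - 1) / cosh x`. Then
`t ^ k * C(n, k - 1) / cosh (n t) = t * w n * f (n t)`, so the claim concerns a Riemann sum of `f`
on `(0, ∞)` with mesh `t`, weighted by a sequence `w` converging to `1 / (k - 1)!`. Such a sum is
the integral over `b > 0` of the step function `w ⌈b / t⌉ * f (⌈b / t⌉ t)`, which tends to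
`f b / (k - 1)!` pointwise. Because `b ≤ ⌈b / t⌉ t`, any antitone integrable majorant `G` of `f`
yields the dominating function `sup |w| * G b`, whatever the value of `t`.
-/

open MeasureTheory Set Topology

section Mesh

variable {K : Type*} [Field K] [LinearOrder K] [IsStrictOrderedRing K] {t b : K}

lemma natCeil_div_eq_add_one_iff [FloorSemiring K] (ht : 0 < t) {n : ℕ} :
    ⌈b / t⌉₊ = n + 1 ↔ b ∈ Ioc ((n : K) * t) (((n + 1 : ℕ) : K) * t) := by
  rw [Nat.ceil_eq_iff n.add_one_ne_zero, Nat.add_sub_cancel,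
    lt_div_iff₀ ht, div_le_iff₀ ht, mem_Ioc]

lemma le_natCeil_div_mul [FloorSemiring K] (ht : 0 < t) : b ≤ (⌈b / t⌉₊ : K) * t :=
  (div_le_iff₀ ht).1 (Nat.le_ceil _)

variable [TopologicalSpace K] [OrderTopology K]

lemma tendsto_natCeil_div_mul_nhdsGT_zero [FloorRing K] (hb : 0 ≤ b) :
    Tendsto (fun t ↦ (⌈b / t⌉₊ : K) * t) (𝓝[>] 0) (𝓝 b) := by
  simpa only [Function.comp_def, div_eq_mul_inv, inv_inv] using
    (tendsto_nat_ceil_mul_div_atTop hb).comp tendsto_inv_nhdsGT_zero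

lemma tendsto_natCeil_div_nhdsGT_zero_atTop [FloorSemiring K] (hb : 0 < b) :
    Tendsto (fun t ↦ ⌈b / t⌉₊) (𝓝[>] 0) atTop := by
  simpa only [Function.comp_def, div_eq_mul_inv] using
    tendsto_nat_ceil_atTop.comp (tendsto_inv_nhdsGT_zero.const_mul_atTop hb)

end Mesh

section RiemannSum

variable {E : Type*} [NormedAddCommGroup E]

lemma aestronglyMeasurable_comp_natCeil_div (g : ℕ → E) (t : ℝ) (μ : Measure ℝ) :
    AEStronglyMeasurable (fun b : ℝ ↦ g ⌈b / t⌉₊) μ :=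
  (StronglyMeasurable.of_discrete.comp_measurable
    (Nat.measurable_ceil.comp (measurable_id.div_const t))).aestronglyMeasurable

variable [NormedSpace ℝ E]

lemma hasSum_smul_of_integrableOn_comp_natCeil_div [CompleteSpace E] {g : ℕ → E} {t : ℝ}
    (ht : 0 < t) (hg : IntegrableOn (fun b : ℝ ↦ g ⌈b / t⌉₊) (Ioi 0)) :
    HasSum (fun n ↦ t • g (n + 1)) (∫ b in Ioi (0 : ℝ), g ⌈b / t⌉₊) := by
  have h_mono : Monotone fun n : ℕ ↦ (n : ℝ) * t := Nat.mono_cast.mul_const ht.le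
  have h_union : ⋃ n : ℕ, Ioc ((n : ℝ) * t) (((n + 1 : ℕ) : ℝ) * t) = Ioi 0 := by
    simpa using iUnion_Ioc_map_succ_eq_Ioi (fun n ↦ h_mono bot_le)
      (not_bddAbove_of_tendsto_atTop (tendsto_natCast_atTop_atTop.atTop_mul_const ht))
  have h_cell (n : ℕ) :
      ∫ b in Ioc ((n : ℝ) * t) (((n + 1 : ℕ) : ℝ) * t), g ⌈b / t⌉₊ = t • g (n + 1) := by
    have h_const : EqOn (fun b : ℝ ↦ g ⌈b / t⌉₊) (fun _ ↦ g (n + 1))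
        (Ioc ((n : ℝ) * t) (((n + 1 : ℕ) : ℝ) * t)) :=
      fun b hb ↦ congrArg g ((natCeil_div_eq_add_one_iff ht).2 hb)
    have h_length : ((n + 1 : ℕ) : ℝ) * t - n * t = t := by push_cast; ring
    rw [setIntegral_congr_fun measurableSet_Ioc h_const, setIntegral_const,
      Real.volume_real_Ioc_of_le (h_mono n.le_succ), h_length]
  rw [← h_union] at hg ⊢
  simpa only [Nat.succ_eq_succ, Nat.succ_eq_add_one, h_cell] using
    hasSum_integral_iUnion (fun _ ↦ measurableSet_Ioc) h_mono.pairwise_disjoint_on_Ioc_succ hg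

variable {w : ℕ → ℝ} {f : ℝ → E} {G : ℝ → ℝ} {L : ℝ}

lemma norm_smul_natCeil_div_le {B t b : ℝ} (hw : ∀ n, ‖w n‖ ≤ B)
    (hfG : ∀ x ∈ Ioi (0 : ℝ), ‖f x‖ ≤ G x) (hG : AntitoneOn G (Ioi 0)) (ht : 0 < t) (hb : 0 < b) :
    ‖w ⌈b / t⌉₊ • f (⌈b / t⌉₊ * t)‖ ≤ B * G b := by
  have h_le : b ≤ ⌈b / t⌉₊ * t := le_natCeil_div_mul ht
  have h_pos : 0 < ⌈b / t⌉₊ * t := hb.trans_le h_le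
  calc ‖w ⌈b / t⌉₊ • f (⌈b / t⌉₊ * t)‖ = ‖w ⌈b / t⌉₊‖ * ‖f (⌈b / t⌉₊ * t)‖ := norm_smul _ _
    _ ≤ B * G b := mul_le_mul (hw _) ((hfG _ h_pos).trans (hG hb h_pos h_le)) (norm_nonneg _)
      ((norm_nonneg _).trans (hw 0))

lemma tendsto_smul_natCeil_div_nhdsGT_zero {b : ℝ} (hw : Tendsto w atTop (𝓝 L))
    (hf : ContinuousAt f b) (hb : 0 < b) :
    Tendsto (fun t : ℝ ↦ w ⌈b / t⌉₊ • f (⌈b / t⌉₊ * t)) (𝓝[>] 0) (𝓝 (L • f b)) :=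
  (hw.comp (tendsto_natCeil_div_nhdsGT_zero_atTop hb)).smul
    (hf.tendsto.comp (tendsto_natCeil_div_mul_nhdsGT_zero hb.le))

theorem tendsto_smul_tsum_smul_nhdsGT_zero [CompleteSpace E] (hw : Tendsto w atTop (𝓝 L))
    (hf : ContinuousOn f (Ioi 0)) (hfG : ∀ x ∈ Ioi (0 : ℝ), ‖f x‖ ≤ G x)
    (hG : AntitoneOn G (Ioi 0)) (hG_int : IntegrableOn G (Ioi 0)) :
    Tendsto (fun t : ℝ ↦ t • ∑' n : ℕ, w (n + 1) • f ((n + 1 : ℕ) * t)) (𝓝[>] 0)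
      (𝓝 (L • ∫ x in Ioi (0 : ℝ), f x)) := by
  obtain ⟨B, hB⟩ : ∃ B, ∀ n, ‖w n‖ ≤ B := by
    simpa only [forall_mem_range] using (Metric.isBounded_range_of_tendsto w hw).exists_norm_le
  let step (t b : ℝ) : E := w ⌈b / t⌉₊ • f (⌈b / t⌉₊ * t)
  have h_meas (t : ℝ) : AEStronglyMeasurable (step t) (volume.restrict (Ioi 0)) :=
    aestronglyMeasurable_comp_natCeil_div (fun n ↦ w n • f (n * t)) t _
  have h_bound {t : ℝ} (ht : 0 < t) : ∀ᵐ b ∂volume.restrict (Ioi 0), ‖step t b‖ ≤ B * G b :=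
    ae_restrict_of_forall_mem measurableSet_Ioi
      fun b hb ↦ norm_smul_natCeil_div_le hB hfG hG ht hb
  have h_integral {t : ℝ} (ht : 0 < t) :
      ∫ b in Ioi 0, step t b = t • ∑' n : ℕ, w (n + 1) • f ((n + 1 : ℕ) * t) := by
    have h_int : IntegrableOn (step t) (Ioi 0) :=
      (hG_int.const_mul B).mono' (h_meas t) (h_bound ht)
    rw [← tsum_const_smul'']
    exact (hasSum_smul_of_integrableOn_comp_natCeil_div (g := fun n ↦ w n • f (n * t))
      ht h_int).tsum_eq.symm
  have h_lim : ∀ᵐ b ∂volume.restrict (Ioi 0),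
      Tendsto (fun t ↦ step t b) (𝓝[>] 0) (𝓝 (L • f b)) :=
    ae_restrict_of_forall_mem measurableSet_Ioi fun b hb ↦
      tendsto_smul_natCeil_div_nhdsGT_zero hw (hf.continuousAt (Ioi_mem_nhds hb)) hb
  rw [← integral_smul]
  refine Tendsto.congr' (eventually_mem_nhdsWithin.mono fun t (ht : 0 < t) ↦ h_integral ht) ?_
  exact tendsto_integral_filter_of_dominated_convergence _ (Eventually.of_forall h_meas)
    (eventually_mem_nhdsWithin.mono fun t (ht : t ∈ Ioi 0) ↦ h_bound ht) (hG_int.const_mul B) h_lim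

end RiemannSum

lemma tendsto_choose_div_pow_atTop (m : ℕ) :
    Tendsto (fun n : ℕ ↦ (n.choose m : ℝ) / (n : ℝ) ^ m) atTop (𝓝 (1 / m.factorial)) := by
  have h_one : Tendsto (fun n : ℕ ↦ (n : ℝ) * (n : ℝ)⁻¹) atTop (𝓝 1) :=
    tendsto_const_nhds.congr' <| (eventually_ne_atTop 0).mono fun n hn ↦
      (mul_inv_cancel₀ (Nat.cast_ne_zero.2 hn)).symm
  simpa only [one_pow, inv_pow, ← div_eq_mul_inv] using
    ProbabilityTheory.tendsto_choose_mul_pow_atTop m h_one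

lemma norm_pow_div_cosh_le_mul_exp_neg_half (m : ℕ) {x : ℝ} (hx : 0 ≤ x) :
    ‖x ^ m / Real.cosh x‖ ≤ 2 ^ (m + 1) * m.factorial * Real.exp (-(1 / 2) * x) := by
  have h_pow : x ^ m ≤ 2 ^ m * m.factorial * Real.exp (x / 2) := by
    have h_taylor := Real.pow_div_factorial_le_exp (x / 2) (by positivity) m
    rw [div_pow, div_div, div_le_iff₀ (by positivity)] at h_taylor
    linarith
  have h_cosh : Real.exp x / 2 ≤ Real.cosh x := by
    rw [Real.cosh_eq]
    linarith [Real.exp_pos (-x)]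
  have h_exp : Real.exp (x / 2) = Real.exp (-(1 / 2) * x) * Real.exp x := by
    rw [← Real.exp_add]
    ring_nf
  calc ‖x ^ m / Real.cosh x‖ = x ^ m / Real.cosh x :=
        Real.norm_of_nonneg (div_nonneg (pow_nonneg hx m) (Real.cosh_pos x).le)
    _ ≤ 2 ^ m * m.factorial * Real.exp (x / 2) / (Real.exp x / 2) := by gcongr
    _ = 2 ^ (m + 1) * m.factorial * Real.exp (-(1 / 2) * x) := by
      rw [h_exp, pow_succ]
      field_simp

/-- for every integer `k ≥ 1`,
`lim_{t→0⁺} t^k Σ_{a≥1} C(a,k−1)/cosh(a t) = (1/(k−1)!) ∫_0^∞ b^{k−1}/cosh b db`. -/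
theorem stmt_11 (k : ℕ) (hk : 1 ≤ k) :
    Tendsto
      (fun t : ℝ => t ^ k * ∑' a : ℕ, (Nat.choose (a + 1) (k - 1) : ℝ) / Real.cosh (((a : ℝ) + 1) * t))
      (nhdsWithin 0 (Set.Ioi 0))
      (nhds ((1 / (Nat.factorial (k - 1) : ℝ)) * ∫ b in Set.Ioi (0 : ℝ), b ^ (k - 1) / Real.cosh b)) := by
  obtain ⟨m, rfl⟩ : ∃ m, k = m + 1 := Nat.exists_eq_add_of_le' hk
  have h_cont : Continuous fun x : ℝ ↦ x ^ m / Real.cosh x :=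
    (continuous_pow m).div Real.continuous_cosh fun x ↦ (Real.cosh_pos x).ne'
  have h_anti : Antitone fun x : ℝ ↦ 2 ^ (m + 1) * m.factorial * Real.exp (-(1 / 2) * x) :=
    fun x y hxy ↦ by
      beta_reduce
      gcongr _ * Real.exp ?_
      linarith
  have h_int := (exp_neg_integrableOn_Ioi 0 (one_half_pos (α := ℝ))).const_mul
    (2 ^ (m + 1) * (m.factorial : ℝ))
  have h_term (t : ℝ) (n : ℕ) :
      t * (((n + 1).choose m / ((n + 1 : ℕ) : ℝ) ^ m) *
        (((n + 1 : ℕ) * t) ^ m / Real.cosh ((n + 1 : ℕ) * t))) =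
      t ^ (m + 1) * ((n + 1).choose m / Real.cosh (((n : ℝ) + 1) * t)) := by
    rw [mul_pow, pow_succ']
    push_cast
    field_simp
  refine (tendsto_smul_tsum_smul_nhdsGT_zero (tendsto_choose_div_pow_atTop m) h_cont.continuousOn
    (fun x hx ↦ norm_pow_div_cosh_le_mul_exp_neg_half m (le_of_lt hx))
    (h_anti.antitoneOn _) h_int).congr fun t ↦ ?_
  simp only [smul_eq_mul, ← tsum_mul_left, Nat.add_sub_cancel, h_term]
end
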